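/- In the group G presented by generators x_{31}, x_{22}, x_{13}, y_m (m ∈ ℤ) and the relations (3) y_{m+2} = x_{22}^{−1} · x_{13}^{x_{22}^{m+1}} · y_m · (x_{13}^{x_{22}^{m}})^{−1} · x_{22} (m ∈ ℤ), the normal closure of the set of elements { y_m^{−1} · x_{13}^{x_{22}^m} · y_m · (x_{13}^{x_{22}^m x_{31}^{−1}})^{−1} : m = 2m_1 even } equals the normal closure of the set { (x_{13}^{(x_{13} x_{22})^{m_1}})^{y_0} · ( x_{13}^{x_{22}^{m} x_{31}^{−1} x_{22}^{−m} (x_{22} x_{13})^{m_1}} )^{−1} : m_1 ∈ ℤ, m = 2m_1 }; that is, modulo relations (3), the relations (2) at even indices m = 2m_1 are equivalent to the relations (x_{13}^{(x_{13} x_{22})^{m_1}})^{y_0} = x_{13}^{x_{22}^{m} x_{31}^{−1} x_{22}^{−m} (x_{22} x_{13})^{m_1}}. -/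

import Mathlib

/-!
Write `a = x₂₂`, `b = x₁₃`. In terms of `z_m = a^m y_m a^{-m}` the relations (3) become
`z_{m+2} = (b a) z_m (a b)⁻¹`, hence `z_{2k} = (b a)^k y_0 (a b)^{-k}` for every integer `k`
(`Z_even`). Substituting this for `y_{2k}` (`Y_even`) shows that the `k`-th element of the first set is the
conjugate of the `k`-th element of the second by `a^{-2k} (a b)^k` (`conj_relators`), so the two
sets have the same normal closure.
-/

namespace Paper

/-- Conjugation `a^b = b⁻¹ * a * b`. -/
def cj {G : Type*} [Group G] (a b : G) : G := b⁻¹ * a * b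

/-- Abstract generators `x_{31}, x_{22}, x_{13}` and `y_m` (`m ∈ ℤ`). -/
inductive GGen
  | x31 | x22 | x13 | y (m : ℤ)

namespace GGen
open FreeGroup
/-- The relations (3): `y_{m+2} = x_{22}⁻¹ x_{13}^{x_{22}^{m+1}} y_m (x_{13}^{x_{22}^m})⁻¹ x_{22}`,
for all `m ∈ ℤ`. -/
def rels3 : Set (FreeGroup GGen) :=
  {r | ∃ m : ℤ,
    r = of (y (m + 2)) *
        ((of x22)⁻¹ * cj (of x13) (of x22 ^ (m + 1)) * of (y m) *
         (cj (of x13) (of x22 ^ m))⁻¹ * of x22)⁻¹}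
end GGen

/-- The group `G` presented by `x_{31}, x_{22}, x_{13}, y_m (m ∈ ℤ)` and the relations (3). -/
abbrev GG := PresentedGroup GGen.rels3

/-- `x_{31}` as an element of `G`. -/
def X31 : GG := PresentedGroup.of GGen.x31
/-- `x_{22}` as an element of `G`. -/
def X22 : GG := PresentedGroup.of GGen.x22
/-- `x_{13}` as an element of `G`. -/
def X13 : GG := PresentedGroup.of GGen.x13
/-- `y_m` as an element of `G`. -/
def Y (m : ℤ) : GG := PresentedGroup.of (GGen.y m)


/-- Two families whose members are conjugate index by index have the same normal closure. -/
theorem normalClosure_eq_of_conj {G ι : Type*} [Group G] (r s c : ι → G)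
    (h : ∀ i, r i = c i * s i * (c i)⁻¹) :
    Subgroup.normalClosure {g : G | ∃ i, g = r i} =
      Subgroup.normalClosure {g : G | ∃ i, g = s i} := by
  apply le_antisymm
  · refine Subgroup.normalClosure_le_normal ?_
    rintro _ ⟨i, rfl⟩
    rw [h i]
    refine Subgroup.normalClosure_normal.conj_mem _ (Subgroup.subset_normalClosure ?_) _
    exact ⟨i, rfl⟩
  · refine Subgroup.normalClosure_le_normal ?_
    rintro _ ⟨i, rfl⟩
    have hs : s i = (c i)⁻¹ * r i * ((c i)⁻¹)⁻¹ := by rw [h i]; group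
    rw [hs]
    refine Subgroup.normalClosure_normal.conj_mem _ (Subgroup.subset_normalClosure ?_) _
    exact ⟨i, rfl⟩

/-- The relations (3), read in `G`. -/
theorem Y_add_two (m : ℤ) :
    Y (m + 2) = X22⁻¹ * cj X13 (X22 ^ (m + 1)) * Y m * (cj X13 (X22 ^ m))⁻¹ * X22 := by
  have h := PresentedGroup.one_of_mem (rels := GGen.rels3) ⟨m, rfl⟩
  simp only [map_mul, map_inv, cj, map_zpow] at h
  rw [mul_inv_eq_one] at h
  exact h

/-- The relations (3) as a two-sided translation of `a^m y_m a^{-m}`. -/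
theorem Z_add_two (m : ℤ) :
    X22 ^ (m + 2) * Y (m + 2) * (X22 ^ (m + 2))⁻¹ =
      X13 * X22 * (X22 ^ m * Y m * (X22 ^ m)⁻¹) * (X22 * X13)⁻¹ := by
  rw [Y_add_two]
  simp only [cj]
  group

/-- The translation `Z_add_two` iterated from `m = 0` in both directions. -/
theorem Z_even (k : ℤ) :
    X22 ^ (2 * k) * Y (2 * k) * (X22 ^ (2 * k))⁻¹ =
      (X13 * X22) ^ k * Y 0 * ((X22 * X13) ^ k)⁻¹ := by
  induction k using Int.induction_on with
  | zero => simp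
  | succ n ih =>
    rw [show (2 * ((n : ℤ) + 1)) = 2 * n + 2 by ring, Z_add_two, ih, zpow_add_one (X22 * X13),
      (Commute.refl (X22 * X13)).zpow_left n |>.eq, add_comm (n : ℤ) 1, zpow_one_add]
    simp only [mul_inv_rev, mul_assoc]
  | pred n ih =>
    have h := Z_add_two (2 * (-(n : ℤ) - 1))
    rw [show 2 * (-(n : ℤ) - 1) + 2 = 2 * (-n) by ring, ih] at h
    rw [zpow_sub_one, zpow_sub_one]
    rw [(Commute.refl (X13 * X22)).inv_right.zpow_left (-(n : ℤ)) |>.eq,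
      (Commute.refl (X22 * X13)).inv_right.zpow_left (-(n : ℤ)) |>.eq]
    rw [eq_mul_inv_iff_mul_eq, ← inv_mul_eq_iff_eq_mul] at h
    rw [← h]
    simp only [mul_inv_rev, inv_inv, mul_assoc]

theorem Y_even (k : ℤ) :
    Y (2 * k) = (X22 ^ (2 * k))⁻¹ * (X13 * X22) ^ k * Y 0 * ((X22 * X13) ^ k)⁻¹ *
      X22 ^ (2 * k) := by
  have h := Z_even k
  rw [mul_inv_eq_iff_eq_mul, ← eq_inv_mul_iff_mul_eq] at h
  rw [h]
  simp only [mul_assoc]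

/-- Under the relations (3), corresponding elements of the two families are conjugate. -/
theorem conj_relators (k : ℤ) :
    (Y (2 * k))⁻¹ * cj X13 (X22 ^ (2 * k)) * Y (2 * k) *
        (cj X13 (X22 ^ (2 * k) * X31⁻¹))⁻¹ =
      ((X22 ^ (2 * k))⁻¹ * (X22 * X13) ^ k) *
        (cj (cj X13 ((X13 * X22) ^ k)) (Y 0) *
          (cj X13 (X22 ^ (2 * k) * X31⁻¹ * X22 ^ (-(2 * k)) * (X22 * X13) ^ k))⁻¹) *
        ((X22 ^ (2 * k))⁻¹ * (X22 * X13) ^ k)⁻¹ := by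
  rw [Y_even, zpow_neg]
  -- only the group axioms are used from here on, so the powers may be arbitrary elements
  generalize X22 ^ (2 * k) = p
  generalize (X22 * X13) ^ k = q
  generalize (X13 * X22) ^ k = r
  simp only [cj]
  group

/-- Lemma 4.3: modulo the relations (3), the relations (2) at even indices `m = 2m₁` are
equivalent to `(x_{13}^{(x_{13}x_{22})^{m₁}})^{y_0}
 = x_{13}^{x_{22}^{m} x_{31}⁻¹ x_{22}^{-m} (x_{22}x_{13})^{m₁}}`:
the two normal closures coincide. -/
theorem statement6 :
    Subgroup.normalClosure
        {g : GG | ∃ m₁ : ℤ,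
          g = (Y (2 * m₁))⁻¹ * cj X13 (X22 ^ (2 * m₁)) * Y (2 * m₁) *
              (cj X13 (X22 ^ (2 * m₁) * X31⁻¹))⁻¹} =
    Subgroup.normalClosure
        {g : GG | ∃ m₁ : ℤ,
          g = cj (cj X13 ((X13 * X22) ^ m₁)) (Y 0) *
              (cj X13 (X22 ^ (2 * m₁) * X31⁻¹ * X22 ^ (-(2 * m₁)) * (X22 * X13) ^ m₁))⁻¹} :=
  normalClosure_eq_of_conj _ _ _ conj_relators

end Paper
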